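/- Let 𝒞 be a semi-ring of subsets of a set E and fix n ∈ ℕ. Then every product set A₁ × ⋯ × A_n with A₁,…,A_n ∈ 𝒞 can be written as a finite disjoint union of product sets of the form B₁ × ⋯ × B_n with B₁,…,B_n ∈ 𝒞 and with the property that for all 1 ≤ i ≤ j ≤ n, either B_i = B_j or B_i ∩ B_j = ∅. -/

import Mathlib

/-- A semi-ring of sets: closed under binary intersections, and differences are
finite disjoint unions of members. -/
def IsSemiRingOfSets {E : Type*} (C : Set (Set E)) : Prop :=
  (∀ A ∈ C, ∀ B ∈ C, A ∩ B ∈ C) ∧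
  (∀ A ∈ C, ∀ B ∈ C, ∃ s : Finset (Set E), (↑s : Set (Set E)) ⊆ C ∧
    (↑s : Set (Set E)).PairwiseDisjoint id ∧ A \ B = ⋃₀ ↑s)


open Classical in
theorem aux_refine {E : Type*} (C : Set (Set E)) (s : Finset (Set E))
    (hs : (↑s : Set (Set E)).PairwiseDisjoint id) (g : Set E → Finset (Set E))
    (hg : ∀ p ∈ s, (∀ q ∈ g p, q ∈ C ∧ q ⊆ p) ∧ (↑(g p) : Set (Set E)).PairwiseDisjoint id) :
    (∀ q ∈ s.biUnion g, q ∈ C) ∧ (↑(s.biUnion g) : Set (Set E)).PairwiseDisjoint id := by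
  constructor
  · intro q hq
    obtain ⟨p, hp, hq⟩ := Finset.mem_biUnion.1 hq
    exact ((hg p hp).1 q hq).1
  · intro q hq r hr hqr
    obtain ⟨p, hp, hq⟩ := Finset.mem_biUnion.1 (Finset.mem_coe.1 hq)
    obtain ⟨p', hp', hr⟩ := Finset.mem_biUnion.1 (Finset.mem_coe.1 hr)
    by_cases h : p = p'
    · subst h
      exact (hg p hp).2 hq hr hqr
    · exact Disjoint.mono ((hg p hp).1 q hq).2 ((hg p' hp').1 r hr).2 (hs hp hp' h)

open Classical in
theorem aux_diff {E : Type*} (C : Set (Set E)) (hC : IsSemiRingOfSets C) (A : Set E) (hA : A ∈ C)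
    (P : Finset (Set E)) (hP : ∀ p ∈ P, p ∈ C) :
    ∃ s : Finset (Set E), (∀ q ∈ s, q ∈ C) ∧ (↑s : Set (Set E)).PairwiseDisjoint id ∧
      ∀ x, (x ∈ A ∧ ∀ p ∈ P, x ∉ p) ↔ ∃ q ∈ s, x ∈ q := by
  induction P using Finset.induction_on with
  | empty => exact ⟨{A}, by simpa using hA, by simp, by simp⟩
  | insert B P _ ih =>
    obtain ⟨s, hsC, hsd, hs⟩ := ih (fun p hp => hP p (Finset.mem_insert_of_mem hp))
    have hB := hP B (Finset.mem_insert_self _ _)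
    have : ∀ p, ∃ t : Finset (Set E), p ∈ s → (↑t : Set (Set E)) ⊆ C ∧
        (↑t : Set (Set E)).PairwiseDisjoint id ∧ p \ B = ⋃₀ ↑t := by
      intro p
      by_cases hp : p ∈ s
      · obtain ⟨t, ht⟩ := hC.2 p (hsC p hp) B hB
        exact ⟨t, fun _ => ht⟩
      · exact ⟨∅, fun h => absurd h hp⟩
    choose g hg using this
    have hsub : ∀ p ∈ s, ∀ x, (x ∈ p ∧ x ∉ B) ↔ ∃ q ∈ g p, x ∈ q := by
      intro p hp x
      have := congrArg (x ∈ ·) (hg p hp).2.2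
      simpa using this
    obtain ⟨h1, h2⟩ := aux_refine C s hsd g (fun p hp => ⟨fun q hq => ⟨(hg p hp).1 hq,
      fun x hx => ((hsub p hp x).2 ⟨q, hq, hx⟩).1⟩, (hg p hp).2.1⟩)
    refine ⟨_, h1, h2, fun x => ?_⟩
    have := hs x
    simp only [Finset.mem_biUnion, Finset.mem_insert]
    constructor
    · rintro ⟨hxA, hx⟩
      obtain ⟨p, hp, hxp⟩ := this.1 ⟨hxA, fun p hp => hx p (Or.inr hp)⟩
      obtain ⟨q, hq, hxq⟩ := (hsub p hp x).1 ⟨hxp, hx B (Or.inl rfl)⟩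
      exact ⟨q, ⟨p, hp, hq⟩, hxq⟩
    · rintro ⟨q, ⟨p, hp, hq⟩, hxq⟩
      obtain ⟨hxp, hxB⟩ := (hsub p hp x).2 ⟨q, hq, hxq⟩
      obtain ⟨hxA, hx⟩ := this.2 ⟨p, hp, hxp⟩
      refine ⟨hxA, ?_⟩
      rintro r (rfl | hr)
      · exact hxB
      · exact hx r hr

open Classical in
theorem aux_common {E : Type*} (C : Set (Set E)) (hC : IsSemiRingOfSets C)
    (I : Finset (Set E)) (hI : ∀ A ∈ I, A ∈ C) :
    ∃ Q : Finset (Set E), (∀ q ∈ Q, q ∈ C) ∧ (↑Q : Set (Set E)).PairwiseDisjoint id ∧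
      ∀ A ∈ I, ∀ x ∈ A, ∃ q ∈ Q, x ∈ q ∧ q ⊆ A := by
  induction I using Finset.induction_on with
  | empty => exact ⟨∅, by simp, by simp, by simp⟩
  | insert A I _ ih =>
    obtain ⟨P, hPC, hPd, hP⟩ := ih (fun p hp => hI p (Finset.mem_insert_of_mem hp))
    have hA := hI A (Finset.mem_insert_self _ _)
    have : ∀ p, ∃ t : Finset (Set E), p ∈ P → (↑t : Set (Set E)) ⊆ C ∧
        (↑t : Set (Set E)).PairwiseDisjoint id ∧ p \ A = ⋃₀ ↑t := by
      intro p
      by_cases hp : p ∈ P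
      · obtain ⟨t, ht⟩ := hC.2 p (hPC p hp) A hA
        exact ⟨t, fun _ => ht⟩
      · exact ⟨∅, fun h => absurd h hp⟩
    choose d hd using this
    have hsub : ∀ p ∈ P, ∀ x, (x ∈ p ∧ x ∉ A) ↔ ∃ q ∈ d p, x ∈ q := by
      intro p hp x
      have := congrArg (x ∈ ·) (hd p hp).2.2
      simpa using this
    obtain ⟨e, heC, hed, he⟩ := aux_diff C hC A hA P hPC
    have hg : ∀ p ∈ P, (∀ q ∈ insert (p ∩ A) (d p), q ∈ C ∧ q ⊆ p) ∧
        (↑(insert (p ∩ A) (d p)) : Set (Set E)).PairwiseDisjoint id := by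
      intro p hp
      constructor
      · intro q hq
        rcases Finset.mem_insert.1 hq with rfl | hq
        · exact ⟨hC.1 p (hPC p hp) A hA, Set.inter_subset_left⟩
        · exact ⟨(hd p hp).1 hq, fun x hx => ((hsub p hp x).2 ⟨q, hq, hx⟩).1⟩
      · rw [Finset.coe_insert]
        refine (hd p hp).2.1.insert ?_
        intro q hq _
        refine Set.disjoint_left.2 fun x hx hxq => ?_
        exact ((hsub p hp x).2 ⟨q, hq, hxq⟩).2 hx.2
    obtain ⟨h1, h2⟩ := aux_refine C P hPd (fun p => insert (p ∩ A) (d p)) hg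
    refine ⟨P.biUnion (fun p => insert (p ∩ A) (d p)) ∪ e, ?_, ?_, ?_⟩
    · intro q hq
      rcases Finset.mem_union.1 hq with hq | hq
      · exact h1 q hq
      · exact heC q hq
    · rw [Finset.coe_union, Set.pairwiseDisjoint_union]
      refine ⟨h2, hed, ?_⟩
      intro q hq r hr _
      obtain ⟨p, hp, hq⟩ := Finset.mem_biUnion.1 (Finset.mem_coe.1 hq)
      refine Set.disjoint_left.2 fun x hxq hxr => ?_
      exact ((he x).2 ⟨r, hr, hxr⟩).2 p hp (((hg p hp).1 q hq).2 hxq)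
    · intro X hX x hx
      have key : ∀ p ∈ P, x ∈ p → ∃ q ∈ insert (p ∩ A) (d p), x ∈ q ∧ (x ∈ A → q ⊆ A) := by
        intro p hp hxp
        by_cases hxA : x ∈ A
        · exact ⟨p ∩ A, Finset.mem_insert_self _ _, ⟨hxp, hxA⟩, fun _ => Set.inter_subset_right⟩
        · obtain ⟨q, hq, hxq⟩ := (hsub p hp x).1 ⟨hxp, hxA⟩
          exact ⟨q, Finset.mem_insert_of_mem hq, hxq, fun h => absurd h hxA⟩
      rcases Finset.mem_insert.1 hX with rfl | hX
      · by_cases h : ∃ p ∈ P, x ∈ p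
        · obtain ⟨p, hp, hxp⟩ := h
          obtain ⟨q, hq, hxq, hqA⟩ := key p hp hxp
          exact ⟨q, Finset.mem_union_left _ (Finset.mem_biUnion.2 ⟨p, hp, hq⟩), hxq, hqA hx⟩
        · obtain ⟨q, hq, hxq⟩ := (he x).1 ⟨hx, fun p hp hxp => h ⟨p, hp, hxp⟩⟩
          exact ⟨q, Finset.mem_union_right _ hq, hxq, fun y hy => ((he y).2 ⟨q, hq, hy⟩).1⟩
      · obtain ⟨p, hp, hxp, hpX⟩ := hP X hX x hx
        obtain ⟨q, hq, hxq, _⟩ := key p hp hxp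
        exact ⟨q, Finset.mem_union_left _ (Finset.mem_biUnion.2 ⟨p, hp, hq⟩), hxq,
          (((hg p hp).1 q hq).2).trans hpX⟩

/-- Lemma A.4 (`DSRLemma`, product decomposition): every product of members of a
semi-ring is a finite disjoint union of products of members whose factors are
pairwise equal or disjoint. -/
theorem stmt18 {E : Type*} (C : Set (Set E)) (hC : IsSemiRingOfSets C)
    (n : ℕ) (A : Fin n → Set E) (hA : ∀ i, A i ∈ C) :
    ∃ (p : ℕ) (B : Fin p → Fin n → Set E),
      (∀ l i, B l i ∈ C) ∧
      (∀ l i j, i ≤ j → B l i = B l j ∨ Disjoint (B l i) (B l j)) ∧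
      (∀ l l', l ≠ l' → Disjoint {x : Fin n → E | ∀ i, x i ∈ B l i}
        {x : Fin n → E | ∀ i, x i ∈ B l' i}) ∧
      {x : Fin n → E | ∀ i, x i ∈ A i} = ⋃ l, {x : Fin n → E | ∀ i, x i ∈ B l i} := by
  classical
  obtain ⟨Q, hQC, hQd, hQ⟩ := aux_common C hC (Finset.univ.image A) (by simpa using hA)
  let T := {f : Fin n → Q // ∀ i, (f i : Set E) ⊆ A i}
  let e : T ≃ Fin (Fintype.card T) := Fintype.equivFin T
  refine ⟨Fintype.card T, fun l i => ((e.symm l).1 i : Set E), ?_, ?_, ?_, ?_⟩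
  · intro l i
    exact hQC _ ((e.symm l).1 i).2
  · intro l i j _
    by_cases h : ((e.symm l).1 i : Set E) = ((e.symm l).1 j : Set E)
    · exact Or.inl h
    · exact Or.inr (hQd ((e.symm l).1 i).2 ((e.symm l).1 j).2 h)
  · intro l l' hl
    refine Set.disjoint_left.2 fun x hx hx' => hl ?_
    apply e.symm.injective
    apply Subtype.ext
    funext i
    apply Subtype.ext
    by_contra h
    exact Set.disjoint_left.1 (hQd ((e.symm l).1 i).2 ((e.symm l').1 i).2 h) (hx i) (hx' i)
  · ext x
    simp only [Set.mem_setOf_eq, Set.mem_iUnion]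
    constructor
    · intro hx
      have : ∀ i, ∃ q ∈ Q, x i ∈ q ∧ q ⊆ A i := fun i => hQ (A i) (by simp) (x i) (hx i)
      choose q hq hxq hqA using this
      refine ⟨e ⟨fun i => ⟨q i, hq i⟩, hqA⟩, fun i => ?_⟩
      simpa using hxq i
    · rintro ⟨l, hl⟩ i
      exact (e.symm l).2 i (hl i)
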